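/- If the maximum length of a directed cycle in an n-vertex strongly connected directed graph G is at most ℓ (with ℓ ≥ 2), then every set S ⊆ E of edges that strongly connects G satisfies |S| ≥ (n−1)·ℓ/(ℓ−1). -/

import Mathlib

/-- A set `S` of directed edges strongly connects the vertex set `V`:
for every pair of vertices there is a directed path using only edges of `S`. -/
def StronglyConnects {V : Type*} (S : Set (V × V)) : Prop :=
  ∀ u v : V, Relation.ReflTransGen (fun a b => (a, b) ∈ S) u v

/-- The edges of the closed walk determined by the vertex list `c`
(consecutive pairs, wrapping around from the last vertex to the first). -/
def cycleEdges {V : Type*} (c : List V) : List (V × V) := c.zip (c.rotate 1)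

/-- `c` is a directed cycle of the graph with edge set `E`: a nonempty list of
distinct vertices all of whose consecutive (wrap-around) pairs are edges.
Its length (number of edges) is `c.length`. -/
def IsCycle {V : Type*} (E : Set (V × V)) (c : List V) : Prop :=
  c ≠ [] ∧ c.Nodup ∧ ∀ e ∈ cycleEdges c, e ∈ E

/-- An edge is redundant if deleting it leaves a strongly connected graph. -/
def Redundant {V : Type*} (E : Set (V × V)) (e : V × V) : Prop :=
  e ∈ E ∧ StronglyConnects (E \ {e})

/-- An edge is necessary if deleting it destroys strong connectivity. -/
def Necessary {V : Type*} (E : Set (V × V)) (e : V × V) : Prop :=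
  e ∈ E ∧ ¬ StronglyConnects (E \ {e})

/-- The set of necessary edges. -/
def necessarySet {V : Type*} (E : Set (V × V)) : Set (V × V) :=
  {e | Necessary E e}

/-- An edge `(u, v)` is unsatisfied if there is no directed path from `v`
back to `u` consisting only of necessary edges. -/
def Unsatisfied {V : Type*} (E : Set (V × V)) (e : V × V) : Prop :=
  e ∈ E ∧ ¬ Relation.ReflTransGen (fun a b => Necessary E (a, b)) e.2 e.1

/-- A redundant edge `r` provides a cycle for an unsatisfied edge `(u, v)` if
there is a directed path from `v` to `u` consisting of necessary edges and `r`. -/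
def ProvidesCycle {V : Type*} (E : Set (V × V)) (r : V × V) (e : V × V) : Prop :=
  Relation.ReflTransGen (fun a b => Necessary E (a, b) ∨ (a, b) = r) e.2 e.1

/-- `w` is a cut vertex: deleting `w` disconnects the underlying undirected graph,
i.e. some two vertices distinct from `w` are joined by no undirected path avoiding `w`. -/
def IsCutVertex {V : Type*} (E : Set (V × V)) (w : V) : Prop :=
  ∃ u v : V, u ≠ w ∧ v ≠ w ∧
    ¬ Relation.ReflTransGen
        (fun a b => a ≠ w ∧ b ≠ w ∧ ((a, b) ∈ E ∨ (b, a) ∈ E)) u v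

/-!
Build `V` up from a single vertex by adding ears of `S`. An ear with `k ≥ 1` internal vertices adds
`k` vertices and `k + 1` edges. A path back through the part already built closes it up to a cycle
with at least `k + 1` vertices, so `k + 1 ≤ ℓ`, and each ear adds at least `ℓ / (ℓ - 1)` edges per
new vertex.
-/

theorem exists_nodup_isChain_cons_of_reflTransGen {α : Type*} {r : α → α → Prop} {a b : α}
    (h : Relation.ReflTransGen r a b) :
    ∃ l : List α, (a :: l).IsChain r ∧ (a :: l).Nodup ∧ (a :: l).getLast? = some b := by
  induction h using Relation.ReflTransGen.head_induction_on with
  | refl => exact ⟨[], by simp⟩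
  | @head a c hac _ ih =>
    obtain ⟨l, hchain, hnodup, hlast⟩ := ih
    by_cases ha : a ∈ c :: l
    · obtain ⟨s, t, hst⟩ := List.append_of_mem ha
      rw [hst] at hchain hnodup hlast
      exact ⟨t, hchain.right_of_append, hnodup.of_append_right, by simpa using hlast⟩
    · exact ⟨c :: l, hchain.cons_cons hac, List.nodup_cons.2 ⟨ha, hnodup⟩, by simpa using hlast⟩

theorem ncard_setOf_mem_list {α : Type*} {l : List α} (hl : l.Nodup) :
    {a | a ∈ l}.ncard = l.length := by
  classical
  rw [← List.coe_toFinset, Set.ncard_coe_finset, List.toFinset_card_of_nodup hl]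

section Ears

variable {V : Type*} {S : Set (V × V)} {A : Set V}

theorem isChain_cons_append_singleton_iff_forall_mem_zip {x y : V} {l : List V} :
    (x :: l ++ [y]).IsChain (fun u v => (u, v) ∈ S) ↔
      ∀ e ∈ (x :: l).zip (l ++ [y]), e ∈ S := by
  rw [List.isChain_cons_append_singleton_iff_forall₂, List.forall₂_iff_zip]
  simp [Prod.forall]

theorem isCycle_cons_iff {v : V} {l : List V} :
    IsCycle S (v :: l) ↔
      (v :: l).Nodup ∧ (v :: l ++ [v]).IsChain (fun u v => (u, v) ∈ S) := by
  rw [isChain_cons_append_singleton_iff_forall_mem_zip]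
  simp [IsCycle, cycleEdges]

theorem exists_edge_leaving {a b : V} (h : Relation.ReflTransGen (fun u v => (u, v) ∈ S) a b)
    (ha : a ∈ A) (hb : b ∉ A) :
    ∃ x ∈ A, ∃ y ∉ A, (x, y) ∈ S ∧
      Relation.ReflTransGen (fun u v => (u, v) ∈ S ∩ A ×ˢ A) a x := by
  induction h using Relation.ReflTransGen.head_induction_on with
  | refl => exact absurd ha hb
  | @head a c hac _ ih =>
    by_cases hc : c ∈ A
    · obtain ⟨x, hx, y, hy, hxy, hcx⟩ := ih hc
      exact ⟨x, hx, y, hy, hxy, hcx.head ⟨hac, ha, hc⟩⟩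
    · exact ⟨a, ha, c, hc, hac, .refl⟩

theorem exists_simple_path_within {a b : V}
    (h : Relation.ReflTransGen (fun u v => (u, v) ∈ S ∩ A ×ˢ A) a b) (ha : a ∈ A) :
    ∃ l : List V, (a :: l).IsChain (fun u v => (u, v) ∈ S) ∧ (a :: l).Nodup ∧
      (a :: l).getLast? = some b ∧ ∀ u ∈ a :: l, u ∈ A := by
  obtain ⟨l, hchain, hnodup, hlast⟩ := exists_nodup_isChain_cons_of_reflTransGen h
  exact ⟨l, hchain.imp fun _ _ huv => huv.1, hnodup, hlast,
    hchain.induction (· ∈ A) _ (fun _ _ huv _ => huv.2.2) fun _ => ha⟩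

/-- The edges of `S` with both ends in `A` strongly connect `A`: the subgraph of `S` induced on
`A`, whose edge set is encoded as `S ∩ A ×ˢ A`, is strongly connected. -/
def StronglyConnectsOn (S : Set (V × V)) (A : Set V) : Prop :=
  ∀ a ∈ A, ∀ b ∈ A, Relation.ReflTransGen (fun u v => (u, v) ∈ S ∩ A ×ˢ A) a b

/-- An ear of `A` in the graph with edge set `S`: a directed path from `x ∈ A` to `y ∈ A` whose
internal vertices, listed by `t`, are distinct and lie outside `A`. There is at least one internal
vertex, and `x = y` is allowed. -/
structure IsEar (S : Set (V × V)) (A : Set V) (x : V) (t : List V) (y : V) : Prop where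
  start_mem : x ∈ A
  end_mem : y ∈ A
  ne_nil : t ≠ []
  nodup : t.Nodup
  notMem : ∀ u ∈ t, u ∉ A
  isChain : (x :: t ++ [y]).IsChain (fun u v => (u, v) ∈ S)

theorem StronglyConnects.exists_isEar (hS : StronglyConnects S) (hA : A.Nonempty)
    (hne : A ≠ Set.univ) : ∃ x t y, IsEar S A x t y := by
  obtain ⟨a, ha⟩ := hA
  obtain ⟨b, hb⟩ := (Set.ne_univ_iff_exists_notMem A).1 hne
  obtain ⟨x, hx, v, hv, hxv, -⟩ := exists_edge_leaving (hS a b) ha hb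
  obtain ⟨z, -, y, hy, hzy, hvz⟩ := exists_edge_leaving (A := Aᶜ) (hS v a) hv (not_not.2 ha)
  obtain ⟨l, hchain, hnodup, hlast, houtside⟩ := exists_simple_path_within hvz hv
  refine ⟨x, v :: l, y, hx, not_not.1 hy, List.cons_ne_nil v l, hnodup, houtside, ?_⟩
  refine List.IsChain.cons_cons hxv (hchain.append (.singleton y) fun u hu w hw => ?_)
  obtain rfl : z = u := Option.some.inj (hlast.symm.trans hu)
  obtain rfl : y = w := Option.some.inj hw
  exact hzy

namespace IsEar

variable {x y : V} {t : List V}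

theorem exists_isCycle (h : IsEar S A x t y) (hA : StronglyConnectsOn S A) :
    ∃ c, IsCycle S c ∧ t.length + 1 ≤ c.length := by
  obtain ⟨p, hchain, hnodup, hlast, hpA⟩ :=
    exists_simple_path_within (hA y h.end_mem x h.start_mem) h.end_mem
  refine ⟨y :: (p ++ t), isCycle_cons_iff.2 ⟨?_, ?_⟩, by simp⟩
  · exact hnodup.append h.nodup fun u hup hut => h.notMem u hut (hpA u hup)
  · obtain ⟨hfirst, htail⟩ := List.isChain_cons.1 h.isChain
    rw [← List.cons_append, List.append_assoc]
    refine hchain.append htail fun u hu w hw => ?_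
    obtain rfl : x = u := Option.some.inj (hlast.symm.trans hu)
    exact hfirst w hw

theorem edge_mem (h : IsEar S A x t y) {e : V × V} (he : e ∈ (x :: t).zip (t ++ [y])) :
    e ∈ S ∩ (A ∪ {u | u ∈ t}) ×ˢ (A ∪ {u | u ∈ t}) := by
  refine ⟨isChain_cons_append_singleton_iff_forall_mem_zip.1 h.isChain e he, ?_, ?_⟩
  · rcases List.mem_cons.1 (List.of_mem_zip he).1 with hx | ht
    · exact Or.inl (hx ▸ h.start_mem)
    · exact Or.inr ht
  · rcases List.mem_append.1 (List.of_mem_zip he).2 with ht | hy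
    · exact Or.inr ht
    · exact Or.inl (List.mem_singleton.1 hy ▸ h.end_mem)

theorem edge_notMem (h : IsEar S A x t y) {e : V × V} (he : e ∈ (x :: t).zip (t ++ [y])) :
    e ∉ A ×ˢ A := by
  obtain ⟨v, l, rfl⟩ := List.exists_cons_of_ne_nil h.ne_nil
  rw [List.cons_append, List.zip_cons_cons, List.mem_cons] at he
  rintro ⟨hfst, hsnd⟩
  rcases he with rfl | he
  · exact h.notMem v List.mem_cons_self hsnd
  · exact h.notMem e.1 (List.of_mem_zip he).1 hfst

theorem nodup_edges (h : IsEar S A x t y) : ((x :: t).zip (t ++ [y])).Nodup := by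
  refine List.Nodup.of_map Prod.fst ?_
  rw [List.map_fst_zip (by simp)]
  exact List.nodup_cons.2 ⟨fun hxt => h.notMem x hxt h.start_mem, h.nodup⟩

theorem stronglyConnectsOn_union (h : IsEar S A x t y) (hA : StronglyConnectsOn S A) :
    StronglyConnectsOn S (A ∪ {u | u ∈ t}) := by
  set B := A ∪ {u | u ∈ t}
  have hchain : (x :: t ++ [y]).IsChain (fun u v => (u, v) ∈ S ∩ B ×ˢ B) :=
    isChain_cons_append_singleton_iff_forall_mem_zip.2 fun _ => h.edge_mem
  have hAB : ∀ a ∈ A, ∀ b ∈ A, Relation.ReflTransGen (fun u v => (u, v) ∈ S ∩ B ×ˢ B) a b :=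
    fun a ha b hb => Relation.ReflTransGen.mono
      (fun _ _ huv => ⟨huv.1, Or.inl huv.2.1, Or.inl huv.2.2⟩) a b (hA a ha b hb)
  have reach_end : ∀ u ∈ B, Relation.ReflTransGen (fun u v => (u, v) ∈ S ∩ B ×ˢ B) u y := by
    rintro u (hu | hu)
    · exact hAB u hu y h.end_mem
    · exact hchain.backwards_concat_induction (Relation.ReflTransGen _ · y) _
        (fun _ _ huv hv => hv.head huv) .refl u (List.mem_cons_of_mem x hu)
  have reach_from_start :
      ∀ u ∈ B, Relation.ReflTransGen (fun u v => (u, v) ∈ S ∩ B ×ˢ B) x u := by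
    rintro u (hu | hu)
    · exact hAB x h.start_mem u hu
    · exact hchain.cons_induction (Relation.ReflTransGen _ x ·) _
        (fun _ _ huv hu => hu.tail huv) .refl u (List.mem_append_left [y] hu)
  exact fun a ha b hb => (reach_end a ha).trans <|
    (hAB y h.end_mem x h.start_mem).trans (reach_from_start b hb)

theorem ncard_union (h : IsEar S A x t y) (hA : A.Finite) :
    (A ∪ {u | u ∈ t}).ncard = A.ncard + t.length := by
  have hdisj : Disjoint A {u | u ∈ t} := Set.disjoint_right.2 h.notMem
  rw [Set.ncard_union_eq hdisj hA t.finite_toSet, ncard_setOf_mem_list h.nodup]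

theorem ncard_edges_add_le (h : IsEar S A x t y) (hS : S.Finite) :
    (S ∩ A ×ˢ A).ncard + (t.length + 1) ≤
      (S ∩ (A ∪ {u | u ∈ t}) ×ˢ (A ∪ {u | u ∈ t})).ncard := by
  set B := A ∪ {u | u ∈ t}
  set edges := (x :: t).zip (t ++ [y])
  have hdisj : Disjoint (S ∩ A ×ˢ A) {e | e ∈ edges} :=
    Set.disjoint_right.2 fun _ he hA => h.edge_notMem he hA.2
  have hsub : S ∩ A ×ˢ A ∪ {e | e ∈ edges} ⊆ S ∩ B ×ˢ B :=
    Set.union_subset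
      (Set.inter_subset_inter_right S
        (Set.prod_mono Set.subset_union_left Set.subset_union_left))
      fun _ => h.edge_mem
  calc (S ∩ A ×ˢ A).ncard + (t.length + 1)
      = (S ∩ A ×ˢ A).ncard + {e | e ∈ edges}.ncard := by
        rw [ncard_setOf_mem_list h.nodup_edges]; simp
    _ = (S ∩ A ×ˢ A ∪ {e | e ∈ edges}).ncard :=
        (Set.ncard_union_eq hdisj (hS.inter_of_left _) edges.finite_toSet).symm
    _ ≤ (S ∩ B ×ˢ B).ncard := Set.ncard_le_ncard hsub (hS.inter_of_left _)

end IsEar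

theorem StronglyConnects.ear_induction [Finite V] (hS : StronglyConnects S) {P : Set V → Prop}
    (a : V) (singleton : P {a})
    (union_ear : ∀ A x t y, StronglyConnectsOn S A → IsEar S A x t y → P A →
      P (A ∪ {u | u ∈ t})) :
    P Set.univ := by
  let good : Set (Set V) := {A | A.Nonempty ∧ StronglyConnectsOn S A ∧ P A}
  have hgood : {a} ∈ good := by
    refine ⟨Set.singleton_nonempty a, ?_, singleton⟩
    rintro _ rfl _ rfl
    exact .refl
  obtain ⟨A, ⟨hne, hconn, hP⟩, hmax⟩ := good.toFinite.exists_maximal ⟨{a}, hgood⟩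
  obtain rfl | hA := eq_or_ne A Set.univ
  · exact hP
  obtain ⟨x, t, y, hear⟩ := hS.exists_isEar hne hA
  obtain ⟨u, hu⟩ := List.exists_mem_of_ne_nil t hear.ne_nil
  have hle : A ∪ {u | u ∈ t} ≤ A :=
    hmax ⟨hne.inl, hear.stronglyConnectsOn_union hconn, union_ear A x t y hconn hear hP⟩
      Set.subset_union_left
  exact absurd (hle (Or.inr hu)) (hear.notMem u hu)

theorem StronglyConnects.card_sub_one_mul_le [Finite V] (hS : StronglyConnects S) {ℓ : ℕ}
    (hℓ : 1 ≤ ℓ) (hcyc : ∀ c, IsCycle S c → c.length ≤ ℓ) :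
    ((Nat.card V : ℝ) - 1) * ℓ ≤ S.ncard * (ℓ - 1) := by
  have hℓ' : (1 : ℝ) ≤ ℓ := by exact_mod_cast hℓ
  rcases isEmpty_or_nonempty V with _ | ⟨⟨a⟩⟩
  · simp [Set.eq_empty_of_isEmpty S]
  suffices ((Set.univ : Set V).ncard - 1 : ℝ) * ℓ ≤
      (S ∩ Set.univ ×ˢ Set.univ).ncard * (ℓ - 1) by
    simpa [Set.ncard_univ] using this
  refine hS.ear_induction (P := fun A => (A.ncard - 1 : ℝ) * ℓ ≤ (S ∩ A ×ˢ A).ncard * (ℓ - 1)) a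
    ?_ fun A x t y hA hear ih => ?_
  · simpa using mul_nonneg (Nat.cast_nonneg _) (sub_nonneg.2 hℓ')
  obtain ⟨c, hc, htc⟩ := hear.exists_isCycle hA
  have hshort : (t.length + 1 : ℝ) ≤ ℓ := by exact_mod_cast htc.trans (hcyc c hc)
  have hedges : ((S ∩ A ×ˢ A).ncard + (t.length + 1) : ℝ) ≤
      (S ∩ (A ∪ {u | u ∈ t}) ×ˢ (A ∪ {u | u ∈ t})).ncard := by
    exact_mod_cast hear.ncard_edges_add_le S.toFinite
  rw [hear.ncard_union A.toFinite]
  push_cast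
  calc (A.ncard + t.length - 1 : ℝ) * ℓ
      = (A.ncard - 1) * ℓ + t.length * ℓ := by ring
    _ ≤ (S ∩ A ×ˢ A).ncard * (ℓ - 1) + (t.length + 1) * (ℓ - 1) :=
        add_le_add ih (by linarith)
    _ = ((S ∩ A ×ˢ A).ncard + (t.length + 1)) * (ℓ - 1) := by ring
    _ ≤ _ := mul_le_mul_of_nonneg_right hedges (sub_nonneg.2 hℓ')

end Ears

/-- If every directed cycle of an `n`-vertex strongly connected
digraph has at most `ℓ ≥ 2` edges, then every strongly connecting subset `S ⊆ E`
satisfies `|S| ≥ (n − 1)·ℓ/(ℓ − 1)`. -/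
theorem scss_lower_bound {V : Type*} [Fintype V] (E : Set (V × V)) (ℓ : ℕ)
    (hℓ : 2 ≤ ℓ)
    (hconn : StronglyConnects E)
    (hcyc : ∀ c : List V, IsCycle E c → c.length ≤ ℓ)
    (S : Set (V × V)) (hS : S ⊆ E) (hSconn : StronglyConnects S) :
    ((Fintype.card V : ℝ) - 1) * ℓ / (ℓ - 1) ≤ (S.ncard : ℝ) := by
  have hcycS : ∀ c, IsCycle S c → c.length ≤ ℓ := fun c hc =>
    hcyc c ⟨hc.1, hc.2.1, fun e he => hS (hc.2.2 e he)⟩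
  have hℓ' : (1 : ℝ) < ℓ := by exact_mod_cast hℓ
  rw [div_le_iff₀ (sub_pos.2 hℓ'), ← Nat.card_eq_fintype_card]
  exact hSconn.card_sub_one_mul_le (by lia) hcycS
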